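/- Suppose there exists a connected simple graph on Fin N admitting a completely degenerate equilibrium of the identical Kuramoto system. Then there exists a connected simple graph on Fin (N+3) admitting a completely degenerate equilibrium of the identical Kuramoto system. -/

import Mathlib

open Real

open Classical in
/-- Adjacency indicator: `1` if `j` and `k` are adjacent in `G`, `0` otherwise. -/
noncomputable def adjInd {V : Type*} (G : SimpleGraph V) (j k : V) : ℝ :=
  if G.Adj j k then 1 else 0

/-- A completely degenerate equilibrium of the identical Kuramoto system on `G`. -/
def IsCDE {V : Type*} [Fintype V] (G : SimpleGraph V) (θ : V → ℝ) : Prop :=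
  (∀ k, ∑ j, adjInd G j k * Real.sin (θ j - θ k) = 0) ∧
  (∀ j k, G.Adj j k → Real.cos (θ j - θ k) = 0)

/-!
Completely degenerate equilibria can be glued at a vertex. Given such equilibria of `G` and `H`,
rotate the second one (the equations only involve phase differences) until the phases at the two
chosen vertices agree, and identify these vertices. No edge is shared, so the force at each vertex
of the wedge is the sum of the forces coming from `G` and from `H`, and both vanish. Gluing on a
4-cycle, whose vertices carry successive quarter turns, adds three vertices.
-/

section Wedge

variable {V W X : Type*} {G : SimpleGraph V} {H : SimpleGraph W} {f : V ↪ X} {g : W ↪ X}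

theorem disjoint_map_of_subsingleton_inter_range
    (hfg : (Set.range f ∩ Set.range g).Subsingleton) : Disjoint (G.map f) (H.map g) := by
  rw [SimpleGraph.disjoint_left]
  intro x y hxy hxy'
  obtain ⟨a, a', -, hx, hy⟩ := (SimpleGraph.map_adj f G x y).1 hxy
  obtain ⟨b, b', -, hx', hy'⟩ := (SimpleGraph.map_adj g H x y).1 hxy'
  exact hxy.ne (hfg ⟨⟨a, hx⟩, b, hx'⟩ ⟨⟨a', hy⟩, b', hy'⟩)

theorem connected_map_sup_map (hG : G.Connected) (hH : H.Connected) {v : V} {w : W}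
    (hvw : f v = g w) (hcover : Set.range f ∪ Set.range g = Set.univ) :
    (G.map f ⊔ H.map g).Connected := by
  rw [SimpleGraph.connected_iff_exists_forall_reachable]
  refine ⟨f v, fun x => ?_⟩
  rcases hcover.ge (Set.mem_univ x) with ⟨a, rfl⟩ | ⟨b, rfl⟩
  · exact ((hG v a).map (SimpleGraph.Embedding.map f G).toHom).mono le_sup_left
  · rw [hvw]
    exact ((hH w b).map (SimpleGraph.Embedding.map g H).toHom).mono le_sup_right

theorem exists_embeddings_meeting_at [Fintype V] [Fintype W] [Fintype X]
    (hcard : Fintype.card X + 1 = Fintype.card V + Fintype.card W) (v : V) (w : W) :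
    ∃ (f : V ↪ X) (g : W ↪ X), f v = g w ∧ (Set.range f ∩ Set.range g).Subsingleton ∧
      Set.range f ∪ Set.range g = Set.univ := by
  classical
  have hW : Fintype.card W = Fintype.card {b // b ≠ w} + 1 := by
    rw [← Fintype.card_option, Fintype.card_congr (Equiv.optionSubtypeNe w)]
  let e : V ⊕ {b // b ≠ w} ≃ X := Fintype.equivOfCardEq (by rw [Fintype.card_sum]; omega)
  let f : V ↪ X := Function.Embedding.inl.trans e.toEmbedding
  let g' : {b // b ≠ w} ↪ X := Function.Embedding.inr.trans e.toEmbedding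
  have hg' : ∀ a b, f a ≠ g' b := fun a b h => Sum.inl_ne_inr (e.injective h)
  let g : W ↪ X := (Equiv.optionSubtypeNe w).symm.toEmbedding.trans
    (g'.optionElim (f v) fun ⟨b, hb⟩ => hg' v b hb.symm)
  have hgw : g w = f v := by simp [g]
  have hg : ∀ b, g b.1 = g' b := fun b => by simp [g, b.2]
  refine ⟨f, g, hgw.symm, ?_, ?_⟩
  · refine (Set.subsingleton_singleton (a := f v)).anti ?_
    rintro _ ⟨⟨a, rfl⟩, b, hab⟩
    by_cases hb : b = w
    · rw [← hab, hb, hgw, Set.mem_singleton_iff]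
    · exact (hg' a ⟨b, hb⟩ (hab.symm.trans (hg ⟨b, hb⟩))).elim
  · refine Set.eq_univ_of_forall fun x => ?_
    obtain ⟨a | b, rfl⟩ := e.surjective x
    · exact Or.inl ⟨a, rfl⟩
    · exact Or.inr ⟨b, hg b⟩

end Wedge

section AdjInd

variable {V X : Type*}

theorem adjInd_map_apply (f : V ↪ X) (G : SimpleGraph V) (j k : V) :
    adjInd (G.map f) (f j) (f k) = adjInd G j k := by
  unfold adjInd
  congr 1
  exact propext SimpleGraph.map_adj_apply

theorem adjInd_map_of_notMem_range {f : V ↪ X} (G : SimpleGraph V) {j k : X}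
    (h : j ∉ Set.range f ∨ k ∉ Set.range f) : adjInd (G.map f) j k = 0 := by
  refine if_neg fun hadj => ?_
  obtain ⟨a, b, -, rfl, rfl⟩ := (SimpleGraph.map_adj f G j k).1 hadj
  simp at h

theorem adjInd_sup {G H : SimpleGraph V} (hGH : Disjoint G H) (j k : V) :
    adjInd (G ⊔ H) j k = adjInd G j k + adjInd H j k := by
  have hnot := SimpleGraph.disjoint_left.1 hGH j k
  unfold adjInd
  split_ifs <;> simp_all

theorem sum_adjInd_mul [Fintype V] (G : SimpleGraph V) [DecidableRel G.Adj] (k : V) (x : V → ℝ) :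
    ∑ j, adjInd G j k * x j = ∑ j ∈ G.neighborFinset k, x j := by
  simp [adjInd, SimpleGraph.neighborFinset_eq_filter, Finset.sum_filter, G.adj_comm]

end AdjInd

namespace IsCDE

variable {V W X : Type*} [Fintype V] [Fintype W] [Fintype X]

theorem add_const {G : SimpleGraph V} {θ : V → ℝ} (hθ : IsCDE G θ) (c : ℝ) :
    IsCDE G fun i => θ i + c := by
  simpa only [IsCDE, add_sub_add_right_eq_sub] using hθ

theorem map {G : SimpleGraph V} (f : V ↪ X) {θ : X → ℝ} (hθ : IsCDE G (θ ∘ f)) :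
    IsCDE (G.map f) θ := by
  refine ⟨fun k => ?_, fun j k hjk => ?_⟩
  · by_cases hk : k ∈ Set.range f
    · obtain ⟨a, rfl⟩ := hk
      rw [← hθ.1 a]
      refine (Fintype.sum_of_injective f f.injective _ _ (fun j hj => ?_) fun b => ?_).symm
      · rw [adjInd_map_of_notMem_range G (Or.inl hj), zero_mul]
      · rw [adjInd_map_apply, Function.comp_apply, Function.comp_apply]
    · simp only [adjInd_map_of_notMem_range G (Or.inr hk), zero_mul, Finset.sum_const_zero]
  · obtain ⟨a, b, hab, rfl, rfl⟩ := (SimpleGraph.map_adj f G j k).1 hjk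
    exact hθ.2 a b hab

theorem sup {G H : SimpleGraph V} {θ : V → ℝ} (hG : IsCDE G θ) (hH : IsCDE H θ)
    (hGH : Disjoint G H) : IsCDE (G ⊔ H) θ := by
  refine ⟨fun k => ?_, fun j k hjk => hjk.elim (hG.2 j k) (hH.2 j k)⟩
  simp only [adjInd_sup hGH, add_mul, Finset.sum_add_distrib, hG.1 k, hH.1 k, add_zero]

theorem exists_map_sup_map {G : SimpleGraph V} {H : SimpleGraph W} {α : V → ℝ} {β : W → ℝ}
    (hα : IsCDE G α) (hβ : IsCDE H β) {f : V ↪ X} {g : W ↪ X} {v : V} {w : W}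
    (hvw : f v = g w) (hfg : (Set.range f ∩ Set.range g).Subsingleton) :
    ∃ θ, IsCDE (G.map f ⊔ H.map g) θ := by
  let β' : W → ℝ := fun b => β b + (α v - β w)
  let θ : X → ℝ := Function.extend f α (Function.extend g β' 0)
  have hθf : θ ∘ f = α := Function.extend_comp f.injective α _
  have hθg : θ ∘ g = β' := by
    funext b
    by_cases hb : g b ∈ Set.range f
    · obtain rfl : b = w := g.injective (hfg ⟨hb, b, rfl⟩ ⟨⟨v, hvw⟩, w, rfl⟩)
      calc θ (g b) = (θ ∘ f) v := by rw [Function.comp_apply, hvw]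
        _ = β' b := by rw [hθf]; exact (add_sub_cancel _ _).symm
    · calc θ (g b) = Function.extend g β' 0 (g b) := Function.extend_apply' _ _ _ hb
        _ = β' b := g.injective.extend_apply _ _ b
  have hGθ : IsCDE (G.map f) θ := map f (hθf ▸ hα)
  have hHθ : IsCDE (H.map g) θ := map g (hθg ▸ hβ.add_const _)
  exact ⟨θ, hGθ.sup hHθ (disjoint_map_of_subsingleton_inter_range hfg)⟩

end IsCDE

theorem exists_connected_isCDE_of_card_add_one_eq {V W X : Type*}
    [Fintype V] [Fintype W] [Fintype X]
    (hcard : Fintype.card X + 1 = Fintype.card V + Fintype.card W)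
    (hV : ∃ G : SimpleGraph V, G.Connected ∧ ∃ θ, IsCDE G θ)
    (hW : ∃ H : SimpleGraph W, H.Connected ∧ ∃ θ, IsCDE H θ) :
    ∃ K : SimpleGraph X, K.Connected ∧ ∃ θ, IsCDE K θ := by
  obtain ⟨G, hG, α, hα⟩ := hV
  obtain ⟨H, hH, β, hβ⟩ := hW
  obtain ⟨v⟩ := hG.nonempty
  obtain ⟨w⟩ := hH.nonempty
  obtain ⟨f, g, hvw, hfg, hcover⟩ := exists_embeddings_meeting_at hcard v w
  exact ⟨G.map f ⊔ H.map g, connected_map_sup_map hG hH hvw hcover,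
    hα.exists_map_sup_map hβ hvw hfg⟩

theorem isCDE_cycleGraph_of_sin_succ_sub_eq_one {n : ℕ} {θ : Fin (n + 3) → ℝ}
    (hθ : ∀ i, sin (θ (i + 1) - θ i) = 1) : IsCDE (SimpleGraph.cycleGraph (n + 3)) θ := by
  have hsin_pred (i : Fin (n + 3)) : sin (θ (i - 1) - θ i) = -1 := by
    rw [← neg_sub, sin_neg, ← hθ (i - 1), sub_add_cancel]
  refine ⟨fun k => ?_, fun j k hjk => cos_eq_zero_iff_sin_eq.2 ?_⟩
  · have hne : k - 1 ≠ k + 1 := by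
      intro h
      have hsin := hsin_pred k
      rw [h, hθ] at hsin
      norm_num at hsin
    rw [sum_adjInd_mul, SimpleGraph.cycleGraph_neighborFinset, Finset.sum_pair hne, hsin_pred, hθ,
      neg_add_cancel]
  · rcases SimpleGraph.cycleGraph_adj.1 hjk with h | h
    · obtain rfl : j = k + 1 := sub_eq_iff_eq_add'.1 h
      exact Or.inl (hθ k)
    · obtain rfl : j = k - 1 := eq_sub_of_add_eq' (sub_eq_iff_eq_add.1 h).symm
      exact Or.inr (hsin_pred k)

theorem sin_quarterTurn_succ_sub {n : ℕ} (hn : 4 ∣ n + 1) (i : Fin (n + 1)) :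
    sin (((i + 1 : Fin (n + 1)) : ℕ) * (π / 2) - (i : ℕ) * (π / 2)) = 1 := by
  rcases eq_or_ne i (Fin.last n) with rfl | hi
  · obtain ⟨m, hm⟩ := hn
    have hm' : (n : ℝ) = 4 * m - 1 := eq_sub_of_add_eq (mod_cast hm)
    rw [Fin.last_add_one, Fin.val_zero, Nat.cast_zero, Fin.val_last, hm',
      show 0 * (π / 2) - (4 * m - 1) * (π / 2) = π / 2 - m * (2 * π) by ring,
      sin_sub_nat_mul_two_pi, sin_pi_div_two]
  · rw [Fin.val_add_one_of_lt (Fin.lt_last_iff_ne_last.2 hi), Nat.cast_add_one, add_one_mul,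
      add_sub_cancel_left, sin_pi_div_two]

theorem isCDE_cycleGraph_quarterTurn {n : ℕ} (hn : 4 ∣ n) :
    IsCDE (SimpleGraph.cycleGraph n) fun i => (i : ℕ) * (π / 2) := by
  rcases n.eq_zero_or_pos with rfl | hpos
  · exact ⟨fun k => k.elim0, fun k => k.elim0⟩
  · obtain ⟨m, rfl⟩ : ∃ m, n = m + 3 := ⟨n - 3, by have := Nat.le_of_dvd hpos hn; omega⟩
    exact isCDE_cycleGraph_of_sin_succ_sub_eq_one (sin_quarterTurn_succ_sub hn)

theorem stmt5_general {V X : Type*} [Fintype V] [Fintype X]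
    (hcard : Fintype.card X = Fintype.card V + 3)
    (h : ∃ G : SimpleGraph V, G.Connected ∧ ∃ θ : V → ℝ, IsCDE G θ) :
    ∃ G' : SimpleGraph X, G'.Connected ∧ ∃ θ : X → ℝ, IsCDE G' θ :=
  exists_connected_isCDE_of_card_add_one_eq (by rw [hcard, Fintype.card_fin]) h
    ⟨SimpleGraph.cycleGraph 4, SimpleGraph.cycleGraph_connected, _,
      isCDE_cycleGraph_quarterTurn dvd_rfl⟩

/-- if some connected graph on `Fin N` admits a completely degenerate
equilibrium, then so does some connected graph on `Fin (N+3)`. -/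
theorem stmt5 {N : ℕ}
    (h : ∃ G : SimpleGraph (Fin N), G.Connected ∧ ∃ θ : Fin N → ℝ, IsCDE G θ) :
    ∃ G' : SimpleGraph (Fin (N + 3)), G'.Connected ∧ ∃ θ : Fin (N + 3) → ℝ, IsCDE G' θ :=
  stmt5_general (by simp only [Fintype.card_fin]) h
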